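/- There is a uniform constant C such that for every h ∈ C₀^∞(ℝ₊×ℝ³) and every t ≥ 0: ‖⟨t−r⟩ ∇_x² h(t,·)‖₂ ≤ C Σ_{|α|≤1} ‖Γ^α h'(t,·)‖₂ + C‖⟨t+r⟩ □h(t,·)‖₂, where ∇_x² h denotes the collection of all second spatial derivatives ∂_i∂_j h, 1 ≤ i,j ≤ 3. -/

import Mathlib

open MeasureTheory Real Finset

noncomputable section

/-- Points of space-time `ℝ×ℝ³`, written `X = (x₀,x₁,x₂,x₃)` with `x₀ = t`. -/
abbrev Pt : Type := Fin 4 → ℝ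
/-- Points of space `ℝ³`. -/
abbrev Sp : Type := Fin 3 → ℝ

/-- Space-time partial derivative `∂_a`. -/
def pd (a : Fin 4) (u : Pt → ℝ) : Pt → ℝ := fun X => fderiv ℝ u X (Pi.single a 1)

/-- Rotation field `Ω_{ij} = x_i ∂_j - x_j ∂_i` (space-time indices). -/
def rot (i j : Fin 4) (u : Pt → ℝ) : Pt → ℝ := fun X => X i * pd j u X - X j * pd i u X

/-- Scaling field `S = t ∂_t + x·∇_x = x^a ∂_a`. -/
def scal (u : Pt → ℝ) : Pt → ℝ := fun X => ∑ a, X a * pd a u X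

/-- The eight vector fields `Γ = (∂, Ω, S)`. -/
def Gam : Fin 8 → (Pt → ℝ) → Pt → ℝ :=
  ![pd 0, pd 1, pd 2, pd 3, rot 1 2, rot 1 3, rot 2 3, scal]

/-- `Γ^α` for a multi-index `α` (a word in the eight fields) of length `m`. -/
def GamComp : ∀ {m : ℕ}, (Fin m → Fin 8) → (Pt → ℝ) → Pt → ℝ
  | 0, _, u => u
  | _ + 1, α, u => Gam (α 0) (GamComp (fun i => α i.succ) u)

/-- Euclidean length `r = |x|` of a spatial point. -/
def rad (x : Sp) : ℝ := Real.sqrt (∑ i, (x i) ^ 2)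

/-- Japanese bracket `⟨z⟩ = (1+z²)^{1/2}`. -/
def jb (z : ℝ) : ℝ := Real.sqrt (1 + z ^ 2)

/-- Euclidean norm `|∂u|` of the space-time gradient. -/
def gradNorm (u : Pt → ℝ) (X : Pt) : ℝ := Real.sqrt (∑ a, (pd a u X) ^ 2)

/-- The unit-speed d'Alembertian `□ = ∂_t² - Δ_x`. -/
def box1 (u : Pt → ℝ) : Pt → ℝ := fun X =>
  pd 0 (pd 0 u) X - ∑ j : Fin 3, pd j.succ (pd j.succ u) X

/-- The d'Alembertian `∂_t² - c²Δ_x` with speed `c`. -/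
def boxc (c : ℝ) (u : Pt → ℝ) : Pt → ℝ := fun X =>
  pd 0 (pd 0 u) X - c ^ 2 * ∑ j : Fin 3, pd j.succ (pd j.succ u) X

/-!
The Laplacian is controlled pointwise by the Klainerman–Sideris identity
`(t² - r²) Δh = t (S ∂₀h - t □h) + ∑ⱼ xⱼ (∑ᵢ Ωᵢⱼ ∂ᵢh - S ∂ⱼh)`: Cauchy–Schwarz bounds the right side
by `(t² + r²)^{1/2}` times first-order expressions in `h'`, and dividing by `t + r` leaves
`|t - r| |Δh|`. Near the light cone `⟨t - r⟩` is bounded and `Δh` itself is among the `∂ h'`.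

The full Hessian follows from the Laplacian by integrating by parts twice against a weight `W`: the
commutator terms contain `∇W`, and `|∇W|² ≤ 4W` lets them be absorbed by `∫ W |∇²h|²` at the price
of the unweighted `∫ |∇h|²`. The weight `⟨t - r⟩²` satisfies this gradient bound but is not `C¹` at
`x = 0`, so it is replaced by the comparable smooth weight `⟨t - ⟨r⟩⟩²`.
-/

lemma rpow_sum_le_sum_rpow {ι : Type*} {s : Finset ι} {a : ι → ℝ} {p : ℝ}
    (ha : ∀ i ∈ s, 0 ≤ a i) (hp : 0 < p) (hp1 : p ≤ 1) :
    (∑ i ∈ s, a i) ^ p ≤ ∑ i ∈ s, a i ^ p :=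
  le_sum_of_subadditive_on_pred (· ^ p) (0 ≤ ·) (Real.zero_rpow hp.ne').le
    (fun _ _ hx hy => Real.rpow_add_le_add_rpow hx hy hp.le hp1) (fun _ _ => add_nonneg) a ha

lemma sum_range_two_sum_words {M κ : Type*} [AddCommMonoid M] [Fintype κ]
    (F : ∀ m : ℕ, (Fin m → κ) → M) :
    ∑ m ∈ range 2, ∑ α, F m α = F 0 Fin.elim0 + ∑ k, F 1 fun _ => k := by
  rw [sum_range_succ, sum_range_one, Fintype.sum_unique,
    Subsingleton.elim default (Fin.elim0 : Fin 0 → κ), ← (Equiv.funUnique (Fin 1) κ).symm.sum_comp]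
  rfl

lemma integrable_mul_sq_of_hasCompactSupport {X : Type*} [TopologicalSpace X]
    [MeasurableSpace X] [OpensMeasurableSpace X] {μ : Measure X} [IsFiniteMeasureOnCompacts μ]
    {f g : X → ℝ} (hf : Continuous f) (hg : Continuous g) (hg' : HasCompactSupport g) :
    Integrable (fun x => f x * g x ^ 2) μ := by
  have hg2 : HasCompactSupport (fun x => g x ^ 2) := hg'.comp_left (g := (· ^ 2)) (by simp)
  exact (hf.mul (hg.pow 2)).integrable_of_hasCompactSupport (hg2.mul_left (f := f))

section DirDeriv

variable {E : Type*} [NormedAddCommGroup E] [NormedSpace ℝ E] {f g : E → ℝ}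

/-- The derivative `D_v f` of a scalar field in a fixed direction `v`, again as a scalar field.
It is read off the Fréchet derivative, so that `pd a` is `dirDeriv (Pi.single a 1)`. -/
def dirDeriv (v : E) (f : E → ℝ) : E → ℝ := fun x => fderiv ℝ f x v

lemma contDiff_dirDeriv {m n : WithTop ℕ∞} (hf : ContDiff ℝ n f) (hmn : m + 1 ≤ n) (v : E) :
    ContDiff ℝ m (dirDeriv v f) :=
  (hf.fderiv_right hmn).clm_apply contDiff_const

lemma contDiff_dirDeriv_dirDeriv {m n : WithTop ℕ∞} (hf : ContDiff ℝ n f) (hmn : m + 1 + 1 ≤ n)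
    (v w : E) : ContDiff ℝ m (dirDeriv v (dirDeriv w f)) :=
  contDiff_dirDeriv (contDiff_dirDeriv hf hmn w) le_rfl v

lemma tsupport_dirDeriv_subset (v : E) (f : E → ℝ) : tsupport (dirDeriv v f) ⊆ tsupport f :=
  tsupport_fderiv_apply_subset ℝ v

lemma hasCompactSupport_dirDeriv (hf : HasCompactSupport f) (v : E) :
    HasCompactSupport (dirDeriv v f) :=
  hf.fderiv_apply ℝ v

lemma dirDeriv_comm (hf : ContDiff ℝ 2 f) (v w : E) :
    dirDeriv v (dirDeriv w f) = dirDeriv w (dirDeriv v f) := by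
  have dirDeriv_dirDeriv (a b x : E) :
      dirDeriv a (dirDeriv b f) x = fderiv ℝ (fderiv ℝ f) x a b := by
    have hd : DifferentiableAt ℝ (fderiv ℝ f) x :=
      (hf.fderiv_right (m := 1) (by norm_num)).differentiable one_ne_zero x
    change fderiv ℝ (fun y => fderiv ℝ f y b) x a = _
    simp [fderiv_clm_apply hd (differentiableAt_const b)]
  ext x
  rw [dirDeriv_dirDeriv, dirDeriv_dirDeriv]
  exact hf.contDiffAt.isSymmSndFDerivAt (by simp) v w

lemma dirDeriv_mul (hf : Differentiable ℝ f) (hg : Differentiable ℝ g) (v x : E) :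
    dirDeriv v (f * g) x = dirDeriv v f x * g x + f x * dirDeriv v g x := by
  simp only [dirDeriv, fderiv_mul (hf x) (hg x), add_apply, smul_apply, smul_eq_mul]
  ring

variable [MeasurableSpace E] [BorelSpace E] {μ : Measure E}

lemma integrable_dirDeriv [IsFiniteMeasureOnCompacts μ] (hf : ContDiff ℝ 1 f)
    (hf' : HasCompactSupport f) (v : E) : Integrable (dirDeriv v f) μ :=
  (contDiff_dirDeriv (m := 0) hf (by simp) v).continuous.integrable_of_hasCompactSupport
    (hasCompactSupport_dirDeriv hf' v)

lemma integral_dirDeriv_eq_zero [FiniteDimensional ℝ E] [μ.IsAddHaarMeasure] (hf : ContDiff ℝ 1 f)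
    (hf' : HasCompactSupport f) (v : E) : ∫ x, dirDeriv v f x ∂μ = 0 := by
  have parts := integral_mul_fderiv_eq_neg_fderiv_mul_of_integrable (μ := μ)
    (f := fun _ => (1 : ℝ)) (g := f) (v := v) (by simp)
    (by simpa using! integrable_dirDeriv hf hf' v)
    (by simpa using hf.continuous.integrable_of_hasCompactSupport hf')
    (fun x _ => differentiableAt_const _) (fun x _ => hf.differentiable one_ne_zero x)
  simpa using! parts

end DirDeriv

section WeightedHessian

lemma le_add_of_sq_le_four_mul {a b x : ℝ} (ha : 0 ≤ a) (hb : 0 ≤ b) (h : x ^ 2 ≤ 4 * (a * b)) :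
    x ≤ a + b :=
  le_of_sq_le_sq (by linarith [four_mul_le_sq_add a b]) (add_nonneg ha hb)

lemma sq_sum_sum_mul_mul_le {ι κ : Type*} [Fintype ι] [Fintype κ] (p : ι → ℝ) (q : κ → ℝ)
    (H : ι → κ → ℝ) :
    (∑ i, ∑ j, p i * q j * H i j) ^ 2
      ≤ (∑ i, p i ^ 2) * ((∑ j, q j ^ 2) * ∑ i, ∑ j, H i j ^ 2) := by
  calc (∑ i, ∑ j, p i * q j * H i j) ^ 2
      = (∑ i, p i * ∑ j, q j * H i j) ^ 2 := by simp only [mul_sum, mul_assoc]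
    _ ≤ (∑ i, p i ^ 2) * ∑ i, (∑ j, q j * H i j) ^ 2 := sum_mul_sq_le_sq_mul_sq _ _ _
    _ ≤ (∑ i, p i ^ 2) * ∑ i, (∑ j, q j ^ 2) * ∑ j, H i j ^ 2 := by
      gcongr
      exact sum_mul_sq_le_sq_mul_sq _ _ _
    _ = _ := by simp only [mul_sum]

-- In the application `p = ∇W`, `q = ∇f`, `H = ∇²f`, and the last sum is a divergence.
lemma mul_sum_sq_le_trace_add_divergence {ι : Type*} [Fintype ι] {W : ℝ} {p : ι → ℝ}
    (hp : ∑ i, p i ^ 2 ≤ 4 * W) (q : ι → ℝ) (H : ι → ι → ℝ) :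
    W * ∑ i, ∑ j, H i j ^ 2 ≤ 4 * (W * (∑ i, H i i) ^ 2) + 6 * ∑ j, q j ^ 2
      + 2 * ∑ i, ∑ j, (p i * q j * H i j - p j * q j * H i i
          + W * (H i j ^ 2 - H j j * H i i)) := by
  set T := ∑ i, H i i
  set N := ∑ i, ∑ j, H i j ^ 2
  set Q := ∑ j, q j ^ 2
  have W_nonneg : 0 ≤ W := by linarith [sum_nonneg fun i (_ : i ∈ univ) => sq_nonneg (p i)]
  have N_nonneg : 0 ≤ N := by positivity
  have Q_nonneg : 0 ≤ Q := by positivity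
  have trace_term : (∑ j, p j * q j) * T ≤ W * T ^ 2 + Q := by
    refine le_add_of_sq_le_four_mul (by positivity) Q_nonneg ?_
    calc ((∑ j, p j * q j) * T) ^ 2 = (∑ j, p j * q j) ^ 2 * T ^ 2 := mul_pow _ _ _
      _ ≤ (4 * W * Q) * T ^ 2 := by grw [sum_mul_sq_le_sq_mul_sq, hp]
      _ = 4 * (W * T ^ 2 * Q) := by ring
  have hessian_term : -(∑ i, ∑ j, p i * q j * H i j) ≤ W * N / 2 + 2 * Q := by
    refine le_add_of_sq_le_four_mul (by linarith [mul_nonneg W_nonneg N_nonneg]) (by positivity) ?_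
    calc (-(∑ i, ∑ j, p i * q j * H i j)) ^ 2 = (∑ i, ∑ j, p i * q j * H i j) ^ 2 := neg_sq _
      _ ≤ 4 * W * (Q * N) := by grw [sq_sum_sum_mul_mul_le, hp]
      _ = 4 * (W * N / 2 * (2 * Q)) := by ring
  have expand : ∑ i, ∑ j, (p i * q j * H i j - p j * q j * H i i
      + W * (H i j ^ 2 - H j j * H i i))
      = ∑ i, ∑ j, p i * q j * H i j - (∑ j, p j * q j) * T + W * (N - T * T) := by
    simp only [T, N, sum_add_distrib, sum_sub_distrib, mul_sub, mul_sum, sum_mul]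
  linarith

variable {E : Type*} [NormedAddCommGroup E] [NormedSpace ℝ E] {W f : E → ℝ}

/-- The exact divergence `D_v (W D_w f D_v D_w f) - D_w (W D_w f D_v² f)`, whose expansion trades
`W (D_v D_w f)²` for `W D_v² f D_w² f`. -/
def hessianDivergence (W f : E → ℝ) (v w : E) : E → ℝ :=
  dirDeriv v (W * (dirDeriv w f * dirDeriv v (dirDeriv w f)))
    - dirDeriv w (W * (dirDeriv w f * dirDeriv v (dirDeriv v f)))

lemma hessianDivergence_apply (hW : ContDiff ℝ 1 W) (hf : ContDiff ℝ 3 f) (v w x : E) :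
    hessianDivergence W f v w x
      = dirDeriv v W x * dirDeriv w f x * dirDeriv v (dirDeriv w f) x
        - dirDeriv w W x * dirDeriv w f x * dirDeriv v (dirDeriv v f) x
        + W x * (dirDeriv v (dirDeriv w f) x ^ 2
          - dirDeriv w (dirDeriv w f) x * dirDeriv v (dirDeriv v f) x) := by
  have hfw : ContDiff ℝ 2 (dirDeriv w f) := contDiff_dirDeriv hf (by norm_num) w
  have hfv : ContDiff ℝ 2 (dirDeriv v f) := contDiff_dirDeriv hf (by norm_num) v
  have hW' := hW.differentiable one_ne_zero
  have hfw' := hfw.differentiable two_ne_zero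
  have hfvw' := (contDiff_dirDeriv (m := 1) hfw (by norm_num) v).differentiable one_ne_zero
  have hfvv' := (contDiff_dirDeriv (m := 1) hfv (by norm_num) v).differentiable one_ne_zero
  have third_order :
      dirDeriv v (dirDeriv v (dirDeriv w f)) = dirDeriv w (dirDeriv v (dirDeriv v f)) := by
    rw [dirDeriv_comm (hf.of_le (by norm_num)) v w, dirDeriv_comm hfv v w]
  rw [hessianDivergence, Pi.sub_apply, dirDeriv_mul hW' (hfw'.mul hfvw'), dirDeriv_mul hfw' hfvw',
    dirDeriv_mul hW' (hfw'.mul hfvv'), dirDeriv_mul hfw' hfvv', third_order]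
  simp only [Pi.mul_apply]
  ring

lemma contDiff_hessianFlux (hW : ContDiff ℝ 1 W) (hf : ContDiff ℝ 3 f) (u v w : E) :
    ContDiff ℝ 1 (W * (dirDeriv w f * dirDeriv v (dirDeriv u f))) :=
  hW.mul ((contDiff_dirDeriv hf (by norm_num) w).mul
    (contDiff_dirDeriv_dirDeriv hf (by norm_num) v u))

lemma hasCompactSupport_hessianFlux (W : E → ℝ) (hf : HasCompactSupport f) (u v w : E) :
    HasCompactSupport (W * (dirDeriv w f * dirDeriv v (dirDeriv u f))) :=
  (hasCompactSupport_dirDeriv hf w).mul_right.mul_left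

variable [MeasurableSpace E] [BorelSpace E] {μ : Measure E}

lemma integrable_hessianDivergence [IsFiniteMeasureOnCompacts μ] (hW : ContDiff ℝ 1 W)
    (hf : ContDiff ℝ 3 f) (hf' : HasCompactSupport f) (v w : E) :
    Integrable (hessianDivergence W f v w) μ :=
  (integrable_dirDeriv (contDiff_hessianFlux hW hf w v w)
      (hasCompactSupport_hessianFlux W hf' w v w) v).sub
    (integrable_dirDeriv (contDiff_hessianFlux hW hf v v w)
      (hasCompactSupport_hessianFlux W hf' v v w) w)

lemma integral_hessianDivergence_eq_zero [FiniteDimensional ℝ E] [μ.IsAddHaarMeasure]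
    (hW : ContDiff ℝ 1 W) (hf : ContDiff ℝ 3 f) (hf' : HasCompactSupport f) (v w : E) :
    ∫ x, hessianDivergence W f v w x ∂μ = 0 := by
  have hc := contDiff_hessianFlux hW hf
  have hs := hasCompactSupport_hessianFlux W hf'
  unfold hessianDivergence
  rw [integral_sub' (integrable_dirDeriv (hc w v w) (hs w v w) v)
    (integrable_dirDeriv (hc v v w) (hs v v w) w), integral_dirDeriv_eq_zero (hc w v w) (hs w v w),
    integral_dirDeriv_eq_zero (hc v v w) (hs v v w), sub_zero]

variable {ι : Type*} [Fintype ι]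

lemma integrable_mul_laplacian_sq [IsFiniteMeasureOnCompacts μ] (hW : Continuous W)
    (hf : ContDiff ℝ 2 f) (hf' : HasCompactSupport f) (e : ι → E) :
    Integrable (fun x => W x * (∑ i, dirDeriv (e i) (dirDeriv (e i) f) x) ^ 2) μ := by
  refine integrable_mul_sq_of_hasCompactSupport hW (continuous_finsetSum _ fun i _ =>
    (contDiff_dirDeriv_dirDeriv (m := 0) hf (by norm_num) _ _).continuous) ?_
  refine HasCompactSupport.intro hf' fun x hx => sum_eq_zero fun i _ => ?_
  exact image_eq_zero_of_notMem_tsupport fun h =>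
    hx (tsupport_dirDeriv_subset _ _ (tsupport_dirDeriv_subset _ _ h))

lemma integrable_mul_hessian_sq [IsFiniteMeasureOnCompacts μ] (hW : Continuous W)
    (hf : ContDiff ℝ 2 f) (hf' : HasCompactSupport f) (e : ι → E) :
    Integrable (fun x => W x * ∑ i, ∑ j, dirDeriv (e i) (dirDeriv (e j) f) x ^ 2) μ := by
  simp only [mul_sum]
  exact integrable_finsetSum _ fun i _ => integrable_finsetSum _ fun j _ =>
    integrable_mul_sq_of_hasCompactSupport hW
      (contDiff_dirDeriv_dirDeriv (m := 0) hf (by norm_num) _ _).continuous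
      (hasCompactSupport_dirDeriv (hasCompactSupport_dirDeriv hf' _) _)

lemma integrable_sum_dirDeriv_sq [IsFiniteMeasureOnCompacts μ] (hf : ContDiff ℝ 1 f)
    (hf' : HasCompactSupport f) (e : ι → E) :
    Integrable (fun x => ∑ i, dirDeriv (e i) f x ^ 2) μ :=
  integrable_finsetSum _ fun i _ => by
    simpa using integrable_mul_sq_of_hasCompactSupport (continuous_const (y := (1 : ℝ)))
      (contDiff_dirDeriv (m := 0) hf (by simp) (e i)).continuous
      (hasCompactSupport_dirDeriv hf' (e i))

theorem integral_mul_hessian_sq_le [FiniteDimensional ℝ E] [μ.IsAddHaarMeasure]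
    (hW : ContDiff ℝ 1 W) (e : ι → E) (hW' : ∀ x, ∑ i, dirDeriv (e i) W x ^ 2 ≤ 4 * W x)
    (hf : ContDiff ℝ 3 f) (hf' : HasCompactSupport f) :
    ∫ x, W x * ∑ i, ∑ j, dirDeriv (e i) (dirDeriv (e j) f) x ^ 2 ∂μ
      ≤ 4 * ∫ x, W x * (∑ i, dirDeriv (e i) (dirDeriv (e i) f) x) ^ 2 ∂μ
        + 6 * ∫ x, ∑ i, dirDeriv (e i) f x ^ 2 ∂μ := by
  have W_nonneg (x : E) : 0 ≤ W x := by
    linarith [hW' x, sum_nonneg fun i (_ : i ∈ univ) => sq_nonneg (dirDeriv (e i) W x)]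
  have lap_int := (integrable_mul_laplacian_sq (μ := μ) hW.continuous (hf.of_le (by norm_num)) hf'
    e).const_mul 4
  have grad_int := (integrable_sum_dirDeriv_sq (μ := μ) (hf.of_le (by norm_num)) hf' e).const_mul 6
  have div_int (i : ι) : Integrable (fun x => ∑ j, hessianDivergence W f (e i) (e j) x) μ :=
    integrable_finsetSum _ fun j _ => integrable_hessianDivergence hW hf hf' _ _
  have sum_div_int := (integrable_finsetSum univ fun i _ => div_int i).const_mul 2
  have integral_divergence : ∫ x, ∑ i, ∑ j, hessianDivergence W f (e i) (e j) x ∂μ = 0 := by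
    rw [integral_finsetSum _ fun i _ => div_int i]
    refine sum_eq_zero fun i _ => ?_
    rw [integral_finsetSum _ fun j _ => integrable_hessianDivergence hW hf hf' _ _]
    exact sum_eq_zero fun j _ => integral_hessianDivergence_eq_zero hW hf hf' _ _
  calc _ ≤ ∫ x, (4 * (W x * (∑ i, dirDeriv (e i) (dirDeriv (e i) f) x) ^ 2)
          + 6 * ∑ i, dirDeriv (e i) f x ^ 2)
          + 2 * ∑ i, ∑ j, hessianDivergence W f (e i) (e j) x ∂μ := by
        refine integral_mono_of_nonneg (.of_forall fun x => mul_nonneg (W_nonneg x) (by positivity))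
          ((lap_int.add grad_int).add sum_div_int) (.of_forall fun x => ?_)
        simp only [hessianDivergence_apply hW hf]
        exact mul_sum_sq_le_trace_add_divergence (hW' x) _ _
    _ = _ := by
        rw [integral_add (by exact lap_int.add grad_int) sum_div_int,
          integral_add lap_int grad_int, integral_const_mul, integral_const_mul,
          integral_const_mul, integral_divergence, mul_zero, add_zero]

end WeightedHessian

section Weight

lemma jb_sq (z : ℝ) : jb z ^ 2 = 1 + z ^ 2 := Real.sq_sqrt (by positivity)

lemma rad_nonneg (x : Sp) : 0 ≤ rad x := Real.sqrt_nonneg _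

lemma rad_sq (x : Sp) : rad x ^ 2 = ∑ i, x i ^ 2 := Real.sq_sqrt (by positivity)

lemma continuous_jb : Continuous jb := by unfold jb; fun_prop

lemma continuous_rad : Continuous rad := by unfold rad; fun_prop

lemma jb_sq_le_of_abs_sub_le_one {a b : ℝ} (hab : |a - b| ≤ 1) : jb a ^ 2 ≤ 3 * jb b ^ 2 := by
  rw [jb_sq, jb_sq]
  have := (sq_le_one_iff_abs_le_one _).2 hab
  nlinarith [sq_nonneg (a - 2 * b)]

lemma abs_jb_sub_le_one {r : ℝ} (hr : 0 ≤ r) : |jb r - r| ≤ 1 := by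
  have lower : r ≤ jb r := Real.le_sqrt_of_sq_le (by linarith)
  have upper : jb r ≤ r + 1 := Real.sqrt_le_iff.2 ⟨by linarith, by nlinarith⟩
  rw [abs_le]
  constructor <;> linarith

/-- The weight `⟨t - ⟨r⟩⟩²`: a replacement for `⟨t - r⟩²` that is also smooth at `x = 0`. -/
def coneWeight (t : ℝ) (x : Sp) : ℝ := jb (t - jb (rad x)) ^ 2

lemma jb_sub_rad_sq_le_coneWeight (t : ℝ) (x : Sp) : jb (t - rad x) ^ 2 ≤ 3 * coneWeight t x :=
  jb_sq_le_of_abs_sub_le_one (by simpa using abs_jb_sub_le_one (rad_nonneg x))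

lemma coneWeight_le_jb_sub_rad_sq (t : ℝ) (x : Sp) : coneWeight t x ≤ 3 * jb (t - rad x) ^ 2 :=
  jb_sq_le_of_abs_sub_le_one (by simpa [abs_sub_comm] using abs_jb_sub_le_one (rad_nonneg x))

lemma jb_rad (x : Sp) : jb (rad x) = √(1 + ∑ i, x i ^ 2) := by rw [jb, rad_sq]

lemma contDiff_jb_rad {n : WithTop ℕ∞} : ContDiff ℝ n (fun x : Sp => jb (rad x)) := by
  simp only [jb_rad]
  exact ContDiff.sqrt (by fun_prop) fun x => by positivity

lemma contDiff_coneWeight {n : WithTop ℕ∞} (t : ℝ) : ContDiff ℝ n (coneWeight t) := by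
  unfold coneWeight
  simp only [jb_sq]
  exact contDiff_const.add ((contDiff_const.sub contDiff_jb_rad).pow 2)

lemma dirDeriv_jb_rad (i : Fin 3) (x : Sp) :
    dirDeriv (Pi.single i 1) (fun y : Sp => jb (rad y)) x = x i / jb (rad x) := by
  have hpos : 1 + ∑ j, x j ^ 2 ≠ 0 := by positivity
  have hderiv := ((HasFDerivAt.fun_sum (u := univ) fun j _ =>
    (hasFDerivAt_apply (𝕜 := ℝ) j x).pow 2).const_add 1).sqrt hpos
  simp only [dirDeriv, jb_rad]
  rw [hderiv.fderiv]
  simp only [one_div, mul_inv_rev, Nat.add_one_sub_one, pow_one, nsmul_eq_mul, Nat.cast_ofNat,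
    smul_apply, _root_.sum_apply, ContinuousLinearMap.proj_apply, Pi.single_apply, smul_eq_mul,
    mul_ite, mul_one, mul_zero, sum_ite_eq', mem_univ, ↓reduceIte]
  field_simp

lemma dirDeriv_coneWeight (t : ℝ) (i : Fin 3) (x : Sp) :
    dirDeriv (Pi.single i 1) (coneWeight t) x = -2 * (t - jb (rad x)) * (x i / jb (rad x)) := by
  have hderiv := (((contDiff_jb_rad (n := 1)).differentiable one_ne_zero x).hasFDerivAt.const_sub
    t).pow 2 |>.const_add 1
  rw [← dirDeriv_jb_rad]
  unfold coneWeight dirDeriv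
  simp only [jb_sq]
  rw [hderiv.fderiv]
  simp

lemma sum_dirDeriv_coneWeight_sq_le (t : ℝ) (x : Sp) :
    ∑ i, dirDeriv (Pi.single i 1) (coneWeight t) x ^ 2 ≤ 4 * coneWeight t x := by
  have radial : ∑ i, (x i / jb (rad x)) ^ 2 ≤ 1 := by
    simp only [div_pow]
    rw [← sum_div, ← rad_sq, jb_sq]
    exact div_le_one_of_le₀ (by linarith) (by positivity)
  calc ∑ i, dirDeriv (Pi.single i 1) (coneWeight t) x ^ 2
      = 4 * (t - jb (rad x)) ^ 2 * ∑ i, (x i / jb (rad x)) ^ 2 := by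
        rw [mul_sum]
        refine sum_congr rfl fun i _ => ?_
        rw [dirDeriv_coneWeight]
        ring
    _ ≤ 4 * (t - jb (rad x)) ^ 2 * 1 := by gcongr
    _ ≤ 4 * coneWeight t x := by rw [coneWeight, jb_sq]; linarith

end Weight

section KlainermanSideris

lemma sub_sq_mul_sq_le_of_eq {ι : Type*} [Fintype ι] {t r T a : ℝ} {x v : ι → ℝ} (ht : 0 ≤ t)
    (hr : 0 ≤ r) (hx : ∑ i, x i ^ 2 = r ^ 2) (hT : (t ^ 2 - r ^ 2) * T = t * a + ∑ i, x i * v i) :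
    (t - r) ^ 2 * T ^ 2 ≤ a ^ 2 + ∑ i, v i ^ 2 := by
  have cauchy : (t * a + ∑ i, x i * v i) ^ 2 ≤ (t ^ 2 + r ^ 2) * (a ^ 2 + ∑ i, v i ^ 2) := by
    simpa [Fintype.sum_option, hx] using sum_mul_sq_le_sq_mul_sq univ
      (fun i : Option ι => i.elim t x) (fun i : Option ι => i.elim a v)
  rcases (add_nonneg ht hr).eq_or_lt with h0 | hpos
  · have : t - r = 0 := by linarith
    rw [this, zero_pow two_ne_zero, zero_mul]
    positivity
  · refine le_of_mul_le_mul_left ?_ (pow_pos hpos 2)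
    calc (t + r) ^ 2 * ((t - r) ^ 2 * T ^ 2) = (t * a + ∑ i, x i * v i) ^ 2 := by rw [← hT]; ring
      _ ≤ (t ^ 2 + r ^ 2) * (a ^ 2 + ∑ i, v i ^ 2) := cauchy
      _ ≤ (t + r) ^ 2 * (a ^ 2 + ∑ i, v i ^ 2) := by gcongr; nlinarith

lemma sq_sub_sq_mul_trace_eq {ι : Type*} [Fintype ι] (t : ℝ) (x : ι → ℝ) (H₀₀ : ℝ) (H₀ : ι → ℝ)
    (H : ι → ι → ℝ) :
    (t ^ 2 - ∑ i, x i ^ 2) * ∑ i, H i i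
      = t * ((t * H₀₀ + ∑ i, x i * H₀ i) - t * (H₀₀ - ∑ i, H i i))
        + ∑ j, x j * (∑ i, (x i * H j i - x j * H i i) - (t * H₀ j + ∑ i, x i * H i j)) := by
  have swap : ∑ j, x j * ∑ i, x i * H i j = ∑ j, x j * ∑ i, x i * H j i := by
    simp only [mul_sum]
    rw [sum_comm]
    exact sum_congr rfl fun i _ => sum_congr rfl fun j _ => by ring
  have time : ∑ j, x j * (t * H₀ j) = t * ∑ i, x i * H₀ i := by
    rw [mul_sum]
    exact sum_congr rfl fun i _ => by ring
  have radial : ∑ j, x j * ∑ i, x j * H i i = (∑ i, x i ^ 2) * ∑ i, H i i := by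
    simp only [← mul_sum, sum_mul, pow_two, mul_assoc]
  simp only [mul_sub, mul_add, sum_sub_distrib, sum_add_distrib]
  rw [time]
  linear_combination radial + swap

variable {h : Pt → ℝ}

lemma pd_comm (hh : ContDiff ℝ 2 h) (a b : Fin 4) : pd a (pd b h) = pd b (pd a h) :=
  dirDeriv_comm hh _ _

lemma rot_swap (i j : Fin 4) (u : Pt → ℝ) (X : Pt) : rot j i u X = -rot i j u X := by
  simp only [rot, neg_sub]

lemma rot_self (i : Fin 4) (u : Pt → ℝ) (X : Pt) : rot i i u X = 0 := sub_self _

lemma sq_sub_sq_mul_laplacian_eq (hh : ContDiff ℝ 2 h) (X : Pt) :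
    (X 0 ^ 2 - ∑ i : Fin 3, X i.succ ^ 2) * ∑ i : Fin 3, pd i.succ (pd i.succ h) X
      = X 0 * (scal (pd 0 h) X - X 0 * box1 h X)
        + ∑ j : Fin 3, X j.succ *
            (∑ i : Fin 3, rot i.succ j.succ (pd i.succ h) X - scal (pd j.succ h) X) := by
  have mixed (i : Fin 3) : pd i.succ (pd 0 h) X = pd 0 (pd i.succ h) X := by rw [pd_comm hh]
  simp only [scal, rot, box1, Fin.sum_univ_succ (n := 3), mixed]
  exact sq_sub_sq_mul_trace_eq (X 0) (fun i : Fin 3 => X i.succ) (pd 0 (pd 0 h) X)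
    (fun i => pd 0 (pd i.succ h) X) (fun i j => pd i.succ (pd j.succ h) X)

lemma sub_sq_mul_laplacian_sq_le (hh : ContDiff ℝ 2 h) {t : ℝ} (ht : 0 ≤ t) (x : Sp) :
    (t - rad x) ^ 2 * (∑ i : Fin 3, pd i.succ (pd i.succ h) (Fin.cons t x)) ^ 2
      ≤ 2 * ∑ a, scal (pd a h) (Fin.cons t x) ^ 2
        + 6 * ∑ i : Fin 3, ∑ j : Fin 3, rot i.succ j.succ (pd i.succ h) (Fin.cons t x) ^ 2
        + 2 * (t ^ 2 * box1 h (Fin.cons t x) ^ 2) := by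
  set X : Pt := Fin.cons t x
  have identity := sq_sub_sq_mul_laplacian_eq hh X
  have time_part : (scal (pd 0 h) X - t * box1 h X) ^ 2
      ≤ 2 * scal (pd 0 h) X ^ 2 + 2 * (t ^ 2 * box1 h X ^ 2) := by
    linarith [sq_nonneg (scal (pd 0 h) X + t * box1 h X)]
  have space_part (j : Fin 3) :
      (∑ i : Fin 3, rot i.succ j.succ (pd i.succ h) X - scal (pd j.succ h) X) ^ 2
        ≤ 6 * ∑ i : Fin 3, rot i.succ j.succ (pd i.succ h) X ^ 2
          + 2 * scal (pd j.succ h) X ^ 2 := by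
    have chebyshev := sq_sum_le_card_mul_sum_sq (s := univ)
      (f := fun i : Fin 3 => rot i.succ j.succ (pd i.succ h) X)
    simp only [card_univ, Fintype.card_fin, Nat.cast_ofNat] at chebyshev
    linarith [sq_nonneg
      (∑ i : Fin 3, rot i.succ j.succ (pd i.succ h) X + scal (pd j.succ h) X)]
  calc _ ≤ (scal (pd 0 h) X - t * box1 h X) ^ 2
        + ∑ j : Fin 3,
          (∑ i : Fin 3, rot i.succ j.succ (pd i.succ h) X - scal (pd j.succ h) X) ^ 2 :=
        sub_sq_mul_sq_le_of_eq ht (rad_nonneg x) (rad_sq x).symm (by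
          rw [rad_sq]
          exact identity)
    _ ≤ (2 * scal (pd 0 h) X ^ 2 + 2 * (t ^ 2 * box1 h X ^ 2))
        + ∑ j : Fin 3, (6 * ∑ i : Fin 3, rot i.succ j.succ (pd i.succ h) X ^ 2
          + 2 * scal (pd j.succ h) X ^ 2) :=
        add_le_add time_part (sum_le_sum fun j _ => space_part j)
    _ = _ := by
        rw [Fin.sum_univ_succ (fun a => scal (pd a h) X ^ 2), sum_comm (s := univ (α := Fin 3)),
          sum_add_distrib, ← mul_sum, ← mul_sum]
        ring

lemma sum_Gam_sq_eq (u : Pt → ℝ) (X : Pt) :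
    ∑ k, Gam k u X ^ 2 = ∑ b, pd b u X ^ 2
      + (rot 1 2 u X ^ 2 + rot 1 3 u X ^ 2 + rot 2 3 u X ^ 2) + scal u X ^ 2 := by
  simp only [Fin.sum_univ_eight, Fin.sum_univ_four]
  change pd 0 u X ^ 2 + pd 1 u X ^ 2 + pd 2 u X ^ 2 + pd 3 u X ^ 2
    + rot 1 2 u X ^ 2 + rot 1 3 u X ^ 2 + rot 2 3 u X ^ 2 + scal u X ^ 2 = _
  ring

lemma sum_rot_sq_le (v : Fin 4 → Pt → ℝ) (X : Pt) :
    ∑ i : Fin 3, ∑ j : Fin 3, rot i.succ j.succ (v i.succ) X ^ 2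
      ≤ ∑ a, (rot 1 2 (v a) X ^ 2 + rot 1 3 (v a) X ^ 2 + rot 2 3 (v a) X ^ 2) := by
  simp only [Fin.sum_univ_three, Fin.sum_univ_four, Fin.succ_zero_eq_one, Fin.succ_one_eq_two,
    Fin.reduceSucc, rot_self, rot_swap 1 2, rot_swap 1 3, rot_swap 2 3, neg_sq]
  linarith [sq_nonneg (rot 1 2 (v 0) X), sq_nonneg (rot 1 3 (v 0) X), sq_nonneg (rot 2 3 (v 0) X),
    sq_nonneg (rot 2 3 (v 1) X), sq_nonneg (rot 1 3 (v 2) X), sq_nonneg (rot 1 2 (v 3) X)]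

lemma sum_succ_sq_le_sum_sum_sq {n : ℕ} (H : Fin (n + 1) → Fin (n + 1) → ℝ) :
    ∑ i : Fin n, H i.succ i.succ ^ 2 ≤ ∑ a, ∑ b, H b a ^ 2 := by
  rw [Fin.sum_univ_succ]
  refine le_add_of_nonneg_of_le (by positivity) (sum_le_sum fun i _ => ?_)
  exact single_le_sum (f := fun b => H b i.succ ^ 2) (fun b _ => sq_nonneg _) (mem_univ i.succ)

lemma jb_sub_sq_mul_laplacian_sq_le (hh : ContDiff ℝ 2 h) {t : ℝ} (ht : 0 ≤ t) (x : Sp) :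
    jb (t - rad x) ^ 2 * (∑ i : Fin 3, pd i.succ (pd i.succ h) (Fin.cons t x)) ^ 2
      ≤ 6 * ∑ k, ∑ a, Gam k (pd a h) (Fin.cons t x) ^ 2
        + 2 * (jb (t + rad x) ^ 2 * box1 h (Fin.cons t x) ^ 2) := by
  have far := sub_sq_mul_laplacian_sq_le hh ht x
  set X : Pt := Fin.cons t x
  have chebyshev := sq_sum_le_card_mul_sum_sq (s := univ)
    (f := fun i : Fin 3 => pd i.succ (pd i.succ h) X)
  simp only [card_univ, Fintype.card_fin, Nat.cast_ofNat] at chebyshev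
  have diagonal := sum_succ_sq_le_sum_sum_sq fun a b => pd a (pd b h) X
  have rotations := sum_rot_sq_le (fun a => pd a h) X
  have bracket : t ^ 2 * box1 h X ^ 2 ≤ jb (t + rad x) ^ 2 * box1 h X ^ 2 := by
    rw [jb_sq]
    gcongr
    nlinarith [mul_nonneg ht (rad_nonneg x), sq_nonneg (rad x)]
  have scal_nonneg : 0 ≤ ∑ a, scal (pd a h) X ^ 2 := by positivity
  have hess_nonneg : 0 ≤ ∑ a, ∑ b, pd b (pd a h) X ^ 2 := by positivity
  rw [sum_comm, jb_sq, one_add_mul]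
  simp only [sum_Gam_sq_eq, sum_add_distrib] at rotations ⊢
  linarith

end KlainermanSideris

section Slice

/-- The restriction `u(t,·)` of a space-time field to the slice of constant time `t`. -/
def spaceSlice (t : ℝ) (u : Pt → ℝ) : Sp → ℝ := fun x => u (Fin.cons t x)

lemma isClosedEmbedding_cons (t : ℝ) :
    Topology.IsClosedEmbedding (fun x : Sp => (Fin.cons t x : Pt)) :=
  Function.LeftInverse.isClosedEmbedding (f := fun (X : Pt) (j : Fin 3) => X j.succ)
    (fun _ => rfl) (by fun_prop) (by fun_prop)

variable {u : Pt → ℝ}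

lemma continuous_spaceSlice (hu : Continuous u) (t : ℝ) : Continuous (spaceSlice t u) :=
  hu.comp (isClosedEmbedding_cons t).continuous

lemma contDiff_spaceSlice {n : WithTop ℕ∞} (hu : ContDiff ℝ n u) (t : ℝ) :
    ContDiff ℝ n (spaceSlice t u) :=
  hu.comp (contDiff_pi.2 (Fin.cases contDiff_const fun j => contDiff_apply ℝ ℝ j))

lemma hasCompactSupport_spaceSlice (hu : HasCompactSupport u) (t : ℝ) :
    HasCompactSupport (spaceSlice t u) :=
  hu.comp_isClosedEmbedding (isClosedEmbedding_cons t)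

lemma dirDeriv_spaceSlice (hu : Differentiable ℝ u) (t : ℝ) (i : Fin 3) :
    dirDeriv (Pi.single i 1) (spaceSlice t u) = spaceSlice t (pd i.succ u) := by
  ext x
  have hcons := (hasFDerivAt_const (𝕜 := ℝ) t x).finCons (F' := fun _ : Fin 4 => ℝ)
    (hasFDerivAt_id (𝕜 := ℝ) x)
  have hcomp : HasFDerivAt (spaceSlice t u) _ x := (hu (Fin.cons t x)).hasFDerivAt.comp x hcons
  have single_succ : (Fin.cons 0 (Pi.single i 1) : Pt) = Pi.single i.succ 1 := by
    ext a
    refine Fin.cases ?_ (fun j => ?_) a <;> simp [Pi.single_apply]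
  rw [dirDeriv, hcomp.fderiv]
  exact congrArg (fderiv ℝ u (Fin.cons t x)) single_succ

lemma dirDeriv_dirDeriv_spaceSlice (hu : ContDiff ℝ 2 u) (t : ℝ) (i j : Fin 3) :
    dirDeriv (Pi.single i 1) (dirDeriv (Pi.single j 1) (spaceSlice t u))
      = spaceSlice t (pd i.succ (pd j.succ u)) := by
  rw [dirDeriv_spaceSlice (hu.differentiable two_ne_zero), dirDeriv_spaceSlice]
  exact (contDiff_dirDeriv (m := 1) hu (by norm_num) _).differentiable one_ne_zero

lemma integrable_mul_sq_spaceSlice {w : Sp → ℝ} (hw : Continuous w) (hu : Continuous u)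
    (hu' : HasCompactSupport u) (t : ℝ) : Integrable (fun x => w x * u (Fin.cons t x) ^ 2) :=
  integrable_mul_sq_of_hasCompactSupport hw (continuous_spaceSlice hu t)
    (hasCompactSupport_spaceSlice hu' t)

lemma pd_eq_zero_of_notMem_tsupport {X : Pt} (hX : X ∉ tsupport u) (a : Fin 4) : pd a u X = 0 :=
  image_eq_zero_of_notMem_tsupport fun h => hX (tsupport_dirDeriv_subset _ _ h)

lemma contDiff_pd {m n : WithTop ℕ∞} (hu : ContDiff ℝ n u) (hmn : m + 1 ≤ n) (a : Fin 4) :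
    ContDiff ℝ m (pd a u) :=
  contDiff_dirDeriv hu hmn _

lemma continuous_pd (hu : ContDiff ℝ 1 u) (a : Fin 4) : Continuous (pd a u) :=
  (contDiff_pd (m := 0) hu (by simp) a).continuous

lemma hasCompactSupport_pd (hu : HasCompactSupport u) (a : Fin 4) : HasCompactSupport (pd a u) :=
  hasCompactSupport_dirDeriv hu _

lemma continuous_Gam (hu : ContDiff ℝ 1 u) (k : Fin 8) : Continuous (Gam k u) := by
  have hpd := continuous_pd hu
  have hrot (i j : Fin 4) : Continuous (rot i j u) := by unfold rot; fun_prop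
  have hscal : Continuous (scal u) := by unfold scal; fun_prop
  fin_cases k
  exacts [hpd 0, hpd 1, hpd 2, hpd 3, hrot 1 2, hrot 1 3, hrot 2 3, hscal]

lemma hasCompactSupport_Gam (hu : HasCompactSupport u) (k : Fin 8) :
    HasCompactSupport (Gam k u) := by
  refine HasCompactSupport.intro hu fun X hX => ?_
  have hpd := pd_eq_zero_of_notMem_tsupport hX
  fin_cases k <;> simp [Gam, rot, scal, hpd]

lemma continuous_box1 (hu : ContDiff ℝ 2 u) : Continuous (box1 u) := by
  have hpd (a : Fin 4) : Continuous (pd a (pd a u)) :=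
    continuous_pd (contDiff_pd hu (by norm_num) a) a
  unfold box1
  fun_prop

lemma hasCompactSupport_box1 (hu : HasCompactSupport u) : HasCompactSupport (box1 u) := by
  refine HasCompactSupport.intro hu fun X hX => ?_
  have hpd (a : Fin 4) : pd a (pd a u) X = 0 :=
    pd_eq_zero_of_notMem_tsupport (fun h => hX (tsupport_dirDeriv_subset _ _ h)) a
  simp [box1, hpd]

end Slice

section Energy

lemma integral_jb_sub_sq_mul_hessian_sq_le {f : Sp → ℝ} (hf : ContDiff ℝ 3 f)
    (hf' : HasCompactSupport f) (t : ℝ) :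
    ∫ x, jb (t - rad x) ^ 2 * ∑ i : Fin 3, ∑ j : Fin 3,
        dirDeriv (Pi.single i 1) (dirDeriv (Pi.single j 1) f) x ^ 2
      ≤ 36 * (∫ x, jb (t - rad x) ^ 2 *
          (∑ i : Fin 3, dirDeriv (Pi.single i 1) (dirDeriv (Pi.single i 1) f) x) ^ 2)
        + 18 * ∫ x, ∑ i : Fin 3, dirDeriv (Pi.single i 1) f x ^ 2 := by
  let e : Fin 3 → Sp := fun i => Pi.single i 1
  have hf2 : ContDiff ℝ 2 f := hf.of_le (by norm_num)
  have weight_cont : Continuous fun x : Sp => jb (t - rad x) ^ 2 :=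
    (continuous_jb.comp (continuous_const.sub continuous_rad)).pow 2
  have cone_cont : Continuous (coneWeight t) := (contDiff_coneWeight (n := 0) t).continuous
  have weighted := integral_mul_hessian_sq_le (μ := volume) (contDiff_coneWeight t) e
    (sum_dirDeriv_coneWeight_sq_le t) hf hf'
  have to_cone : ∫ x, jb (t - rad x) ^ 2 * ∑ i, ∑ j, dirDeriv (e i) (dirDeriv (e j) f) x ^ 2
      ≤ 3 * ∫ x, coneWeight t x * ∑ i, ∑ j, dirDeriv (e i) (dirDeriv (e j) f) x ^ 2 := by
    rw [← integral_const_mul]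
    refine integral_mono (integrable_mul_hessian_sq weight_cont hf2 hf' e)
      ((integrable_mul_hessian_sq cone_cont hf2 hf' e).const_mul 3) fun x => ?_
    dsimp only
    grw [jb_sub_rad_sq_le_coneWeight, mul_assoc]
  have from_cone : ∫ x, coneWeight t x * (∑ i, dirDeriv (e i) (dirDeriv (e i) f) x) ^ 2
      ≤ 3 * ∫ x, jb (t - rad x) ^ 2 * (∑ i, dirDeriv (e i) (dirDeriv (e i) f) x) ^ 2 := by
    rw [← integral_const_mul]
    refine integral_mono (integrable_mul_laplacian_sq cone_cont hf2 hf' e)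
      ((integrable_mul_laplacian_sq weight_cont hf2 hf' e).const_mul 3) fun x => ?_
    dsimp only
    grw [coneWeight_le_jb_sub_rad_sq, mul_assoc]
  linarith

variable {h : Pt → ℝ}

lemma integrable_sum_Gam_pd_sq (hh : ContDiff ℝ 2 h) (hh' : HasCompactSupport h) (k : Fin 8)
    (t : ℝ) : Integrable fun x : Sp => ∑ a, Gam k (pd a h) (Fin.cons t x) ^ 2 :=
  integrable_finsetSum _ fun a _ => by
    simpa using integrable_mul_sq_spaceSlice (continuous_const (y := (1 : ℝ)))
      (continuous_Gam (contDiff_pd hh (by norm_num) a) k)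
      (hasCompactSupport_Gam (hasCompactSupport_pd hh' a) k) t

lemma integrable_sum_pd_sq (hh : ContDiff ℝ 1 h) (hh' : HasCompactSupport h) (t : ℝ) :
    Integrable fun x : Sp => ∑ a, pd a h (Fin.cons t x) ^ 2 :=
  integrable_finsetSum _ fun a _ => by
    simpa using integrable_mul_sq_spaceSlice (continuous_const (y := (1 : ℝ)))
      (continuous_pd hh a) (hasCompactSupport_pd hh' a) t

lemma integral_jb_sub_sq_mul_laplacian_sq_le (hh : ContDiff ℝ 2 h) (hh' : HasCompactSupport h)
    {t : ℝ} (ht : 0 ≤ t) :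
    ∫ x : Sp, jb (t - rad x) ^ 2 * (∑ i : Fin 3, pd i.succ (pd i.succ h) (Fin.cons t x)) ^ 2
      ≤ 6 * (∑ k, ∫ x : Sp, ∑ a, Gam k (pd a h) (Fin.cons t x) ^ 2)
        + 2 * ∫ x : Sp, jb (t + rad x) ^ 2 * box1 h (Fin.cons t x) ^ 2 := by
  have Gam_int (k : Fin 8) := integrable_sum_Gam_pd_sq hh hh' k t
  have box_int : Integrable fun x : Sp => jb (t + rad x) ^ 2 * box1 h (Fin.cons t x) ^ 2 :=
    integrable_mul_sq_spaceSlice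
      ((continuous_jb.comp (continuous_const.add continuous_rad)).pow 2) (continuous_box1 hh)
      (hasCompactSupport_box1 hh') t
  have sum_Gam_int := (integrable_finsetSum univ fun k _ => Gam_int k).const_mul 6
  rw [← integral_finsetSum _ fun k _ => Gam_int k, ← integral_const_mul, ← integral_const_mul,
    ← integral_add sum_Gam_int (box_int.const_mul 2)]
  exact integral_mono_of_nonneg (.of_forall fun x => by positivity)
    (sum_Gam_int.add (box_int.const_mul 2))
    (.of_forall fun x => jb_sub_sq_mul_laplacian_sq_le hh ht x)

theorem integral_jb_sub_sq_mul_pd_pd_sq_le (hh : ContDiff ℝ 3 h) (hh' : HasCompactSupport h)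
    {t : ℝ} (ht : 0 ≤ t) :
    ∫ x : Sp, jb (t - rad x) ^ 2 *
        ∑ i : Fin 3, ∑ j : Fin 3, pd i.succ (pd j.succ h) (Fin.cons t x) ^ 2
      ≤ 15 ^ 2 * ((∫ x : Sp, ∑ a, pd a h (Fin.cons t x) ^ 2)
        + (∑ k, ∫ x : Sp, ∑ a, Gam k (pd a h) (Fin.cons t x) ^ 2)
        + ∫ x : Sp, jb (t + rad x) ^ 2 * box1 h (Fin.cons t x) ^ 2) := by
  have hh2 : ContDiff ℝ 2 h := hh.of_le (by norm_num)
  have laplacian := integral_jb_sub_sq_mul_laplacian_sq_le hh2 hh' ht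
  have hessian := integral_jb_sub_sq_mul_hessian_sq_le (contDiff_spaceSlice hh t)
    (hasCompactSupport_spaceSlice hh' t) t
  simp only [dirDeriv_dirDeriv_spaceSlice hh2] at hessian
  simp only [dirDeriv_spaceSlice (hh2.differentiable two_ne_zero), spaceSlice] at hessian
  have gradient : ∫ x : Sp, ∑ i : Fin 3, pd i.succ h (Fin.cons t x) ^ 2
      ≤ ∫ x : Sp, ∑ a, pd a h (Fin.cons t x) ^ 2 := by
    refine integral_mono_of_nonneg (.of_forall fun x => by positivity)
      (integrable_sum_pd_sq (hh2.of_le one_le_two) hh' t) (.of_forall fun x => ?_)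
    simp only [Fin.sum_univ_succ (n := 3)]
    exact le_add_of_nonneg_left (sq_nonneg _)
  have grad_nonneg : 0 ≤ ∫ x : Sp, ∑ a, pd a h (Fin.cons t x) ^ 2 := by positivity
  have Gam_nonneg : 0 ≤ ∑ k, ∫ x : Sp, ∑ a, Gam k (pd a h) (Fin.cons t x) ^ 2 := by positivity
  have box_nonneg : 0 ≤ ∫ x : Sp, jb (t + rad x) ^ 2 * box1 h (Fin.cons t x) ^ 2 := by positivity
  linarith

end Energy

theorem stmt_12_general :
    ∃ C : ℝ, 0 < C ∧
      ∀ (h : Pt → ℝ), ContDiff ℝ 3 h → HasCompactSupport h →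
        ∀ t : ℝ, 0 ≤ t →
          (∫ x : Sp, jb (t - rad x) ^ 2 *
              ∑ i : Fin 3, ∑ j : Fin 3,
                (pd i.succ (pd j.succ h) (Fin.cons t x)) ^ 2) ^ ((1:ℝ)/2)
            ≤ C * ∑ m ∈ Finset.range 2, ∑ α : Fin m → Fin 8,
                (∫ x : Sp, ∑ a, (GamComp α (pd a h) (Fin.cons t x)) ^ 2) ^ ((1:ℝ)/2)
              + C * (∫ x : Sp,
                  jb (t + rad x) ^ 2 * (box1 h (Fin.cons t x)) ^ 2) ^ ((1:ℝ)/2) := by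
  refine ⟨15, by norm_num, fun h hh hh' t ht => ?_⟩
  set B := ∫ x : Sp, jb (t + rad x) ^ 2 * box1 h (Fin.cons t x) ^ 2
  have B_nonneg : 0 ≤ B := integral_nonneg fun x => by positivity
  let G (k : Fin 8) := ∫ x : Sp, ∑ a, Gam k (pd a h) (Fin.cons t x) ^ 2
  let G₀ := ∫ x : Sp, ∑ a, pd a h (Fin.cons t x) ^ 2
  have G_nonneg (k : Fin 8) : 0 ≤ G k := integral_nonneg fun x => by positivity
  have G₀_nonneg : 0 ≤ G₀ := integral_nonneg fun x => by positivity
  have sum_G_nonneg : 0 ≤ ∑ k, G k := sum_nonneg fun k _ => G_nonneg k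
  have words := sum_range_two_sum_words fun m (α : Fin m → Fin 8) =>
    (∫ x : Sp, ∑ a, GamComp α (pd a h) (Fin.cons t x) ^ 2) ^ ((1:ℝ)/2)
  calc _ ≤ (15 ^ 2 * (G₀ + ∑ k, G k + B)) ^ ((1:ℝ)/2) :=
        Real.rpow_le_rpow (integral_nonneg fun x => by positivity)
          (integral_jb_sub_sq_mul_pd_pd_sq_le hh hh' ht) (by norm_num)
    _ = 15 * (G₀ + ∑ k, G k + B) ^ ((1:ℝ)/2) := by
        rw [Real.mul_rpow (by positivity) (by positivity), ← Real.sqrt_eq_rpow,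
          Real.sqrt_sq (by norm_num)]
    _ ≤ 15 * (G₀ ^ ((1:ℝ)/2) + ∑ k, G k ^ ((1:ℝ)/2) + B ^ ((1:ℝ)/2)) := by
        grw [Real.rpow_add_le_add_rpow (by positivity) B_nonneg (by norm_num) (by norm_num),
          Real.rpow_add_le_add_rpow G₀_nonneg sum_G_nonneg (by norm_num) (by norm_num),
          rpow_sum_le_sum_rpow (fun k _ => G_nonneg k) (by norm_num) (by norm_num)]
    _ = _ := by
        rw [words, mul_add]
        rfl

/-- inequality (3.5) of the paper.  For `h ∈ C₀^∞(ℝ₊×ℝ³)` and `t ≥ 0`,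
`‖⟨t-r⟩∇_x² h(t,·)‖₂ ≤ C Σ_{|α|≤1}‖Γ^α h'(t,·)‖₂ + C‖⟨t+r⟩□h(t,·)‖₂`. -/
theorem stmt_12 :
    ∃ C : ℝ, 0 < C ∧
      ∀ (h : Pt → ℝ), ContDiff ℝ (⊤ : ℕ∞) h → HasCompactSupport h →
        (∀ X : Pt, X 0 < 0 → h X = 0) →
        ∀ t : ℝ, 0 ≤ t →
          (∫ x : Sp, jb (t - rad x) ^ 2 *
              ∑ i : Fin 3, ∑ j : Fin 3,
                (pd i.succ (pd j.succ h) (Fin.cons t x)) ^ 2) ^ ((1:ℝ)/2)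
            ≤ C * ∑ m ∈ Finset.range 2, ∑ α : Fin m → Fin 8,
                (∫ x : Sp, ∑ a, (GamComp α (pd a h) (Fin.cons t x)) ^ 2) ^ ((1:ℝ)/2)
              + C * (∫ x : Sp,
                  jb (t + rad x) ^ 2 * (box1 h (Fin.cons t x)) ^ 2) ^ ((1:ℝ)/2) := by
  obtain ⟨C, hC, bound⟩ := stmt_12_general
  exact ⟨C, hC, fun h hh hs _ => bound h (mod_cast contDiff_infty.1 hh 3) hs⟩
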